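/- Let k be a commutative field, E/k a field extension of finite degree over a purely transcendental subextension K = k((xᵢ)ᵢ) with E/K monogenous (generated by one element), and suppose (L_j/K)_{j∈ℕ} is an infinite family of pairwise linearly disjoint Galois extensions of K inside a fixed algebraic closure, each with Galois group G. Then infinitely many of the L_j are linearly disjoint from E over K; in particular there exists j with E ⊗_K L_j a field and Gal(E ⊗_K L_j / E) ≅ G. -/

import Mathlib

/-!
Each `L j` is separable over `K`, so `E ⊓ L j` lies in the separable closure of `K` in `E`. That
closure is finite separable, hence simple, and so has only finitely many subextensions; the
nontrivial `E ⊓ L j` are pairwise distinct ones, so `E ⊓ L j = ⊥` for all but finitely many `j`.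

For Galois `L` with `L ⊓ E = ⊥`, the minimal polynomial over `E` of an element of `L` has its
coefficients in `L ⊓ E`, since its roots lie in `L`; so the degree does not drop, which gives linear
disjointness. Then `E ⊗[K] L` is a field, and each of its `E`-automorphisms preserves `L`, because
by normality all `K`-embeddings of `L` into a domain have the same image.
-/

open Polynomial IntermediateField
open scoped TensorProduct

theorem finite_setOf_not_disjoint {α ι : Type*} [SemilatticeInf α] [OrderBot α] {a : α}
    {f : ι → α} (ha : (Set.Iic a).Finite) (hf : Pairwise fun i j => Disjoint (f i) (f j)) :
    {i | ¬ Disjoint a (f i)}.Finite := by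
  refine Set.Finite.of_finite_image (f := fun i => a ⊓ f i)
    (ha.subset (Set.image_subset_iff.2 fun _ _ => inf_le_left)) fun i hi j _ hij => ?_
  by_contra hne
  exact hi (disjoint_iff_inf_le.2 (hf hne inf_le_right (hij.trans_le inf_le_right)))

section Subextensions

variable {K Ω : Type*} [Field K] [Field Ω] [Algebra K Ω]

theorem finite_Iic_of_finite_of_isSeparable (F : IntermediateField K Ω)
    [FiniteDimensional K F] [Algebra.IsSeparable K F] : (Set.Iic F).Finite := by
  have : Finite (IntermediateField K F) :=
    Field.finite_intermediateField_of_exists_primitive_element K F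
      (Field.exists_primitive_element K F)
  exact (Set.finite_range (lift (F := F))).subset fun M hM => ⟨restrict hM, lift_restrict hM⟩

theorem inf_le_lift_separableClosure (E L : IntermediateField K Ω) [Algebra.IsSeparable K L] :
    E ⊓ L ≤ lift (separableClosure K E) := by
  intro x hx
  have hsep : IsSeparable K x := (le_separableClosure K Ω L) hx.2
  exact (mem_lift ⟨x, hx.1⟩).2 ((map_mem_separableClosure_iff E.val).1 hsep)

theorem finite_setOf_inf_ne_bot {ι : Type*} (E : IntermediateField K Ω)
    [FiniteDimensional K (separableClosure K E)] (L : ι → IntermediateField K Ω)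
    [∀ j, Algebra.IsSeparable K (L j)] (hL : Pairwise fun i j => L i ⊓ L j = ⊥) :
    {j | E ⊓ L j ≠ ⊥}.Finite := by
  let S := lift (separableClosure K E)
  have : FiniteDimensional K S := (liftAlgEquiv _).toLinearEquiv.finiteDimensional
  have : Algebra.IsSeparable K S :=
    .of_algHom K _ (liftAlgEquiv (separableClosure K E)).symm.toAlgHom
  refine (finite_setOf_not_disjoint (finite_Iic_of_finite_of_isSeparable S)
    fun i j hij => disjoint_iff.2 (hL hij)).subset fun j hj hS => hj ?_
  exact eq_bot_iff.2 (hS (inf_le_lift_separableClosure E (L j)) inf_le_right)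

variable {E L : IntermediateField K Ω}

theorem coe_coeff_minpoly_mem_of_normal [Normal K L] {x : Ω} (hx : x ∈ L) (n : ℕ) :
    ((minpoly E x).coeff n : Ω) ∈ L := by
  let p := (minpoly K (⟨x, hx⟩ : L)).map (algebraMap K L)
  have hp : p.Monic := (minpoly.monic (Normal.isIntegral ‹_› _)).map _
  have hsplits : p.Splits := Normal.splits ‹_› _
  have hmap : p.map (algebraMap L Ω) =
      ((minpoly K x).map (algebraMap K E)).map (algebraMap E Ω) := by
    simp only [p, Polynomial.map_map, ← IsScalarTower.algebraMap_eq, minpoly_eq]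
  have hdvd : (minpoly E x).map (algebraMap E Ω) ∣ p.map (algebraMap L Ω) :=
    hmap ▸ Polynomial.map_dvd _ (minpoly.dvd_map_of_isScalarTower K E x)
  have hint : IsIntegral E x := ((Normal.isIntegral ‹_› (⟨x, hx⟩ : L)).map L.val).tower_top
  have hlift : (minpoly E x).map (algebraMap E Ω) ∈ lifts (algebraMap L Ω) :=
    ((hsplits.map _).of_dvd (hp.map _).ne_zero hdvd).mem_lift_of_roots_mem_range
      ((minpoly.monic hint).map _) _ fun a ha =>
        hsplits.mem_range_of_isRoot hp.ne_zero ((isRoot_of_mem_roots ha).dvd hdvd)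
  obtain ⟨c, hc⟩ := (lifts_iff_coeff_lifts _).1 hlift n
  have hcoe : (c : Ω) = (minpoly E x).coeff n := hc.trans (coeff_map _ n)
  exact hcoe ▸ c.2

theorem minpoly_eq_map_of_inf_eq_bot [Normal K L] (h : L ⊓ E = ⊥) {x : Ω} (hx : x ∈ L) :
    minpoly E x = (minpoly K x).map (algebraMap K E) := by
  have hint : IsIntegral K x := (Normal.isIntegral ‹_› (⟨x, hx⟩ : L)).map L.val
  have hlift : minpoly E x ∈ lifts (algebraMap K E) := (lifts_iff_coeff_lifts _).2 fun n => by
    obtain ⟨c, hc⟩ := mem_bot.1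
      (h.le ⟨coe_coeff_minpoly_mem_of_normal hx n, ((minpoly E x).coeff n).2⟩)
    exact ⟨c, Subtype.ext hc⟩
  obtain ⟨q, hq⟩ := (mem_lifts _).1 hlift
  have hroot : aeval x q = 0 := by rw [← aeval_map_algebraMap E, hq, minpoly.aeval]
  refine eq_of_monic_of_associated (minpoly.monic hint.tower_top) ((minpoly.monic hint).map _)
    (associated_of_dvd_dvd (minpoly.dvd_map_of_isScalarTower K E x) ?_)
  exact hq ▸ Polynomial.map_dvd _ (minpoly.dvd K x hroot)

theorem linearDisjoint_adjoin_simple_of_minpoly_eq_map {x : Ω} (hint : IsIntegral K x)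
    (h : minpoly E x = (minpoly K x).map (algebraMap K E)) : K⟮x⟯.LinearDisjoint E := by
  refine LinearDisjoint.of_basis_left (adjoin.powerBasis hint).basis ?_
  have hdeg : (adjoin.powerBasis hint).dim = (minpoly E x).natDegree := by
    rw [adjoin.powerBasis_dim, h, natDegree_map]
  convert (linearIndependent_pow (K := E) x).comp (finCongr hdeg) (finCongr hdeg).injective
  ext i
  simp

theorem linearDisjoint_of_isGalois_of_inf_eq_bot [IsGalois K L] (h : L ⊓ E = ⊥) :
    L.LinearDisjoint E := by
  have : Algebra.IsIntegral K L.toSubalgebra := inferInstanceAs (Algebra.IsIntegral K L)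
  refine linearDisjoint_iff'.2 (Subalgebra.LinearDisjoint.of_linearDisjoint_finite_left _ _
    fun A hA (hfin : FiniteDimensional K A) => ?_)
  obtain ⟨F, rfl⟩ : ∃ F : IntermediateField K Ω, F.toSubalgebra = A :=
    ⟨A.toIntermediateField' (isField_of_isIntegral_of_isField' (Field.toIsField K)), rfl⟩
  have : FiniteDimensional K F := hfin
  have : Algebra.IsSeparable K F := .of_algHom K L (inclusion hA)
  obtain ⟨x, hx⟩ := Field.exists_primitive_element K F
  have hF : F = K⟮(x : Ω)⟯ := by rw [← lift_adjoin_simple, hx, lift_top]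
  have hxL : (x : Ω) ∈ L := hA x.2
  have hint : IsIntegral K (x : Ω) := (Algebra.IsIntegral.isIntegral x).map F.val
  exact hF ▸ linearDisjoint_iff'.1
    (linearDisjoint_adjoin_simple_of_minpoly_eq_map hint (minpoly_eq_map_of_inf_eq_bot h hxL))

end Subextensions

theorem exists_algEquiv_comp_eq_of_normal {K L D : Type*} [Field K] [Field L] [Algebra K L]
    [Normal K L] [CommRing D] [IsDomain D] [Algebra K D] (i j : L →ₐ[K] D) :
    ∃ σ : Gal(L/K), ∀ x, i (σ x) = j x := by
  have hi : Function.Injective i := i.toRingHom.injective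
  have hrange (x : L) : j x ∈ i.range := by
    have hroot : j x ∈ (minpoly K x).rootSet D := by
      rw [mem_rootSet_of_ne (minpoly.ne_zero (Normal.isIntegral ‹_› x)), aeval_algHom_apply,
        minpoly.aeval, map_zero]
    rw [← (Normal.splits ‹_› x).image_rootSet i] at hroot
    exact Set.image_subset_range _ _ hroot
  let e : L ≃ₐ[K] i.range := AlgEquiv.ofInjective i hi
  let σ : L →ₐ[K] L := e.symm.toAlgHom.comp (j.codRestrict i.range hrange)
  exact ⟨.ofBijective σ (AlgHom.normal_bijective K L L σ),
    fun x => congrArg Subtype.val (e.apply_symm_apply (j.codRestrict i.range hrange x))⟩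

/-- Base change `σ ↦ id ⊗ σ` of algebra automorphisms along `R → A`; the comparison map for Galois
groups under extension of the ground field. -/
def autBaseChange (R A B : Type*) [CommSemiring R] [CommSemiring A] [Semiring B]
    [Algebra R A] [Algebra R B] : (B ≃ₐ[R] B) →* (A ⊗[R] B ≃ₐ[A] A ⊗[R] B) where
  toFun := Algebra.TensorProduct.congr .refl
  map_one' := Algebra.TensorProduct.congr_refl
  map_mul' σ τ := Algebra.TensorProduct.congr_trans .refl .refl τ σ

theorem autBaseChange_bijective (K E L : Type*) [Field K] [Field E] [Field L] [Algebra K E]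
    [Algebra K L] [Normal K L] [IsDomain (E ⊗[K] L)] :
    Function.Bijective (autBaseChange K E L) := by
  refine ⟨fun σ τ h => ?_, fun f => ?_⟩
  · ext x
    refine Algebra.TensorProduct.includeRight_injective (A := E) (algebraMap K E).injective ?_
    exact DFunLike.congr_fun h (1 ⊗ₜ[K] x)
  · obtain ⟨σ, hσ⟩ := exists_algEquiv_comp_eq_of_normal
      (Algebra.TensorProduct.includeRight : L →ₐ[K] E ⊗[K] L)
      ((f.toAlgHom.restrictScalars K).comp Algebra.TensorProduct.includeRight)
    exact ⟨σ, AlgEquiv.coe_toAlgHom_injective (Algebra.TensorProduct.ext_ring (AlgHom.ext hσ))⟩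

theorem infinitely_many_linearly_disjoint_general {K Ω ι : Type*} [Field K] [Field Ω]
    [Algebra K Ω] (E : IntermediateField K Ω) [FiniteDimensional K (separableClosure K E)]
    (L : ι → IntermediateField K Ω) (hgal : ∀ j, IsGalois K (L j))
    (hdisj : Pairwise fun i j => L i ⊓ L j = ⊥) :
    ∀ᶠ j in Filter.cofinite, E.LinearDisjoint (L j) ∧ IsField (E ⊗[K] L j) ∧
      Nonempty ((E ⊗[K] L j ≃ₐ[E] E ⊗[K] L j) ≃* Gal(L j/K)) := by
  have hfinite : ∀ᶠ j in Filter.cofinite, E ⊓ L j = ⊥ := finite_setOf_inf_ne_bot E L hdisj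
  filter_upwards [hfinite] with j hj
  have hld : E.LinearDisjoint (L j) :=
    (linearDisjoint_of_isGalois_of_inf_eq_bot (inf_comm E (L j) ▸ hj)).symm
  have := hld.isDomain
  exact ⟨hld, hld.isField_of_isAlgebraic (.inr inferInstance),
    ⟨(MulEquiv.ofBijective _ (autBaseChange_bijective K E (L j))).symm⟩⟩

/-- Let `K` be a (commutative) field, `Ω` an extension of `K`, `E = K(α)` a monogenous
finite-degree subextension, and `(L j)_{j ∈ ℕ}` a family of pairwise linearly disjoint
(i.e. with pairwise trivial intersections) Galois subextensions of `Ω/K`, each with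
Galois group isomorphic to the finite group `G`.  Then infinitely many of the `L j` are
linearly disjoint from `E` over `K`; in particular there is a `j` with `E ∩ L j = K`,
`E ⊗_K L j` a field, and `Gal(E ⊗_K L j / E) ≅ G`. -/
theorem infinitely_many_linearly_disjoint
    {K Ω : Type*} [Field K] [Field Ω] [Algebra K Ω]
    (G : Type*) [Group G] [Finite G]
    (E : IntermediateField K Ω) (α : Ω) (hE : E = IntermediateField.adjoin K {α})
    (hfin : FiniteDimensional K E)
    (L : ℕ → IntermediateField K Ω)
    (hgal : ∀ j, IsGalois K (L j))
    (hG : ∀ j, Nonempty ((↥(L j) ≃ₐ[K] ↥(L j)) ≃* G))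
    (hdisj : ∀ i j, i ≠ j → L i ⊓ L j = ⊥) :
    {j : ℕ | E ⊓ L j = ⊥}.Infinite ∧
    ∃ j : ℕ, E ⊓ L j = ⊥ ∧
      IsField (TensorProduct K E (L j)) ∧
      Nonempty ((TensorProduct K E (L j) ≃ₐ[E] TensorProduct K E (L j)) ≃* G) := by
  have h := infinitely_many_linearly_disjoint_general E L hgal fun i j => hdisj i j
  refine ⟨Filter.frequently_cofinite_iff_infinite.1
    (h.mono fun j hj => hj.1.inf_eq_bot).frequently, ?_⟩
  obtain ⟨j, hld, hfield, ⟨e⟩⟩ := h.exists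
  exact ⟨j, hld.inf_eq_bot, hfield, (hG j).map e.trans⟩
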